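/- Let n ≥ 1, let U ⊆ ℝⁿ be an open set, let x₀ ∈ U, and let Γ : Fin n → (U → Matrix n ℝ) be smooth and curvature-free on U, i.e. ∂_k Γ_l − ∂_l Γ_k + Γ_k·Γ_l − Γ_l·Γ_k = 0 on U for all k, l. Then there exist an open neighborhood V ⊆ U of x₀ and a smooth map A : V → Matrix n ℝ such that A x is invertible for every x ∈ V and ∂_k A x = −(Γ k x)·(A x) for every x ∈ V and every k. (A flat linear connection admits a local frame in which its components vanish.) -/

import Mathlib

attribute [local instance] Matrix.normedAddCommGroup Matrix.normedSpace

/-!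
Put `ω = ∑ k, Γ k dx^k`, so that a parallel frame is a solution of `dA = -ω A`. Transport the
initial value `m` along the rays issuing from a point `p`: for each `x` let `φ` solve
`φ' = -ω(v) φ`, `φ 0 = m`, where `v = x - p` and `ω` is taken at `p + t v`, and put `A x = φ 1`.
The derivative `Z` of `φ` with respect to `x` solves the equation of variation, and when the
curvature `F = dω + ω ∧ ω` vanishes, this equation is also solved by `Z t h = -t ω(h) (φ t)`: in
general the two sides differ by `-t F(v, h) (φ t)`. At `t = 1` this says `dA = -ω A`. The same
equation shows that `A` is once more differentiable than `ω`.
-/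

open Set Topology

lemma eventually_forall_norm_sub_lt {T X Y : Type*} [TopologicalSpace T]
    [SeminormedAddCommGroup X] [SeminormedAddCommGroup Y] {g : T × X → Y} {S : Set T} {u : X}
    (hS : IsCompact S) (hg : ∀ t ∈ S, ContinuousAt g (t, u)) {ε : ℝ} (hε : 0 < ε) :
    ∀ᶠ h in 𝓝 (0 : X), ∀ t ∈ S, ‖g (t, u + h) - g (t, u)‖ < ε := by
  refine hS.eventually_forall_of_forall_eventually fun t₀ ht₀ ↦ ?_
  have hshift : Filter.Tendsto (fun z : X × T ↦ g (z.2, u + z.1)) (𝓝 (0, t₀)) (𝓝 (g (t₀, u))) :=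
    (hg t₀ ht₀).tendsto.comp (Continuous.tendsto' (by fun_prop) _ _ (by simp))
  have hbase : Filter.Tendsto (fun z : X × T ↦ g (z.2, u)) (𝓝 (0, t₀)) (𝓝 (g (t₀, u))) :=
    (hg t₀ ht₀).tendsto.comp (Continuous.tendsto' (by fun_prop) _ _ (by simp))
  exact (hshift.sub hbase).norm.eventually_lt_const (by simpa using hε)

section LinearODE

variable {E M N : Type*} [NormedAddCommGroup E] [NormedSpace ℝ E]
  [NormedAddCommGroup M] [NormedSpace ℝ M] [NormedAddCommGroup N] [NormedSpace ℝ N]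
  {a b c : ℝ}

lemma isIntegralCurveOn_union {φ : ℝ → M} {v : ℝ → M → M} {s t : Set ℝ} (hs : IsClosed s)
    (ht : IsClosed t) (hφs : IsIntegralCurveOn φ v s) (hφt : IsIntegralCurveOn φ v t) :
    IsIntegralCurveOn φ v (s ∪ t) := by
  have hderiv : ∀ {s : Set ℝ} {x : ℝ}, IsClosed s → IsIntegralCurveOn φ v s →
      HasDerivWithinAt φ (v x (φ x)) s x := fun {s x} hs hφ ↦ by
    by_cases hx : x ∈ s
    · exact hφ x hx
    · exact HasFDerivWithinAt.of_notMem_closure (by rwa [hs.closure_eq])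
  exact fun x _ ↦ (hderiv hs hφs).union (hderiv ht hφt)

lemma isIntegralCurveOn_Icc_ite {φ ψ : ℝ → M} {v : ℝ → M → M} (hac : a ≤ c) (hcb : c ≤ b)
    (hφ : IsIntegralCurveOn φ v (Icc a c)) (hψ : IsIntegralCurveOn ψ v (Icc c b))
    (hφψ : φ c = ψ c) :
    IsIntegralCurveOn (fun t ↦ if t ≤ c then φ t else ψ t) v (Icc a b) := by
  have hleft : EqOn (fun t ↦ if t ≤ c then φ t else ψ t) φ (Icc a c) := fun t ht ↦ if_pos ht.2
  have hright : EqOn (fun t ↦ if t ≤ c then φ t else ψ t) ψ (Icc c b) := fun t ht ↦ by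
    rcases ht.1.eq_or_lt with rfl | hlt
    · simpa using hφψ
    · exact if_neg hlt.not_ge
  rw [← Icc_union_Icc_eq_Icc hac hcb]
  refine isIntegralCurveOn_union isClosed_Icc isClosed_Icc (fun t ht ↦ ?_) fun t ht ↦ ?_
  · simpa only [hleft ht] using! (hφ t ht).congr_of_mem hleft ht
  · simpa only [hright ht] using! (hψ t ht).congr_of_mem hright ht

lemma exists_isIntegralCurveOn_linear_of_mul_le_half [CompleteSpace M] {G : ℝ → M →L[ℝ] M}
    {K : NNReal} (hab : a ≤ b) (hG : ContinuousOn G (Icc a b)) (hK : ∀ t ∈ Icc a b, ‖G t‖₊ ≤ K)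
    (hKab : K * (b - a) ≤ 1 / 2) (m : M) :
    ∃ φ : ℝ → M, φ a = m ∧ IsIntegralCurveOn φ (fun t y ↦ G t y) (Icc a b) := by
  have hPL : IsPicardLindelof (fun t y ↦ G t y) (⟨a, left_mem_Icc.2 hab⟩ : Icc a b) m
      ‖m‖₊ 0 (K * (2 * ‖m‖₊)) K :=
    { lipschitzOnWith := fun t ht ↦ ((G t).lipschitz.weaken (hK t ht)).lipschitzOnWith
      continuousOn := fun y _ ↦ hG.clm_apply continuousOn_const
      norm_le := fun t ht y hy ↦ (G t).le_of_opNorm_le_of_le (hK t ht) <| by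
        have := norm_le_norm_add_norm_sub' y m
        have hball : ‖y - m‖ ≤ ‖m‖ := mem_closedBall_iff_norm.1 hy
        change ‖y‖ ≤ 2 * ‖m‖
        linarith
      mul_max_le := by
        have := mul_le_mul_of_nonneg_right hKab (norm_nonneg m)
        rw [sub_self, max_eq_left (sub_nonneg.2 hab)]
        push_cast
        linarith }
  exact hPL.exists_eq_forall_mem_Icc_hasDerivWithinAt₀

theorem exists_isIntegralCurveOn_linear [CompleteSpace M] {G : ℝ → M →L[ℝ] M} (hab : a ≤ b)
    (hG : ContinuousOn G (Icc a b)) (m : M) :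
    ∃ φ : ℝ → M, φ a = m ∧ IsIntegralCurveOn φ (fun t y ↦ G t y) (Icc a b) := by
  obtain ⟨K, hK⟩ := isCompact_Icc.exists_bound_of_continuousOn hG
  lift K to NNReal using (norm_nonneg _).trans (hK a (left_mem_Icc.2 hab))
  obtain ⟨n, hn⟩ := pow_unbounded_of_one_lt (K * (b - a) * 2) one_lt_two
  induction n generalizing a b m with
  | zero =>
    exact exists_isIntegralCurveOn_linear_of_mul_le_half hab hG hK (by linarith) m
  | succ n ih =>
    have hac : a ≤ (a + b) / 2 := by linarith
    have hcb : (a + b) / 2 ≤ b := by linarith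
    have hleft : Icc a ((a + b) / 2) ⊆ Icc a b := Icc_subset_Icc_right hcb
    have hright : Icc ((a + b) / 2) b ⊆ Icc a b := Icc_subset_Icc_left hac
    rw [pow_succ] at hn
    obtain ⟨φ, hφa, hφ⟩ := ih hac (hG.mono hleft) m (fun t ht ↦ hK t (hleft ht)) (by linarith)
    obtain ⟨ψ, hψc, hψ⟩ := ih hcb (hG.mono hright) (φ ((a + b) / 2))
      (fun t ht ↦ hK t (hright ht)) (by linarith)
    exact ⟨_, by simp [hac, hφa], isIntegralCurveOn_Icc_ite hac hcb hφ hψ hψc.symm⟩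

lemma norm_sub_le_gronwallBound_of_linear {G : ℝ → M →L[ℝ] M} {φ ψ ψ' : ℝ → M} {K δ ε : ℝ}
    (hK : ∀ t ∈ Icc a b, ‖G t‖ ≤ K) (hφ : IsIntegralCurveOn φ (fun t y ↦ G t y) (Icc a b))
    (hψ : ∀ t ∈ Icc a b, HasDerivWithinAt ψ (ψ' t) (Icc a b) t)
    (hδ : ‖φ a - ψ a‖ ≤ δ) (hε : ∀ t ∈ Icc a b, ‖ψ' t - G t (ψ t)‖ ≤ ε) :
    ∀ t ∈ Icc a b, ‖φ t - ψ t‖ ≤ gronwallBound δ K ε (t - a) := by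
  have hderiv : ∀ t ∈ Icc a b,
      HasDerivWithinAt (fun s ↦ φ s - ψ s) (G t (φ t) - ψ' t) (Icc a b) t :=
    fun t ht ↦ (hφ t ht).sub (hψ t ht)
  refine norm_le_gronwallBound_of_norm_deriv_right_le
    (fun t ht ↦ (hderiv t ht).continuousWithinAt)
    (fun t ht ↦ (hderiv t (Ico_subset_Icc_self ht)).mono_of_mem_nhdsWithin
      (Icc_mem_nhdsGE_of_mem ht)) hδ fun t ht ↦ ?_
  have ht := Ico_subset_Icc_self ht
  calc ‖G t (φ t) - ψ' t‖ = ‖G t (φ t - ψ t) - (ψ' t - G t (ψ t))‖ := by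
        rw [map_sub]
        congr 1
        abel
    _ ≤ K * ‖φ t - ψ t‖ + ε :=
        (norm_sub_le _ _).trans (add_le_add ((G t).le_of_opNorm_le (hK t ht) _) (hε t ht))

lemma gronwallBound_mul_left (r δ K ε x : ℝ) :
    gronwallBound (r * δ) K (r * ε) x = r * gronwallBound δ K ε x := by
  unfold gronwallBound
  split_ifs <;> ring

variable {T : Type*} [NormedAddCommGroup T] [NormedSpace ℝ T]

lemma eventually_forall_norm_fderiv_remainder_le {g : T × E → N} {S : Set T} {u : E}
    (hS : IsCompact S) (hg : ∀ t ∈ S, ContDiffAt ℝ 1 g (t, u)) {ε : ℝ} (hε : 0 < ε) :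
    ∀ᶠ h in 𝓝 (0 : E), ∀ t ∈ S,
      ‖g (t, u + h) - g (t, u) - fderiv ℝ g (t, u) (0, h)‖ ≤ ε * ‖h‖ := by
  refine hS.eventually_forall_of_forall_eventually fun t₀ ht₀ ↦ ?_
  have hstrict := ((hg t₀ ht₀).hasStrictFDerivAt one_ne_zero).isLittleO.def (half_pos hε)
  have hfderiv : ∀ᶠ z in 𝓝 (t₀, u), ‖fderiv ℝ g z - fderiv ℝ g (t₀, u)‖ < ε / 2 := by
    simpa only [dist_eq_norm] using
      Metric.continuousAt_iff'.1 ((hg t₀ ht₀).continuousAt_fderiv one_ne_zero) _ (half_pos hε)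
  have hbase : Filter.Tendsto (fun z : E × T ↦ (z.2, u)) (𝓝 (0, t₀)) (𝓝 (t₀, u)) :=
    Continuous.tendsto' (by fun_prop) _ _ (by simp)
  have hshift : Filter.Tendsto (fun z : E × T ↦ (z.2, u + z.1)) (𝓝 (0, t₀)) (𝓝 (t₀, u)) :=
    Continuous.tendsto' (by fun_prop) _ _ (by simp)
  filter_upwards [(hshift.prodMk_nhds hbase).eventually hstrict, hbase.eventually hfderiv]
    with ⟨h, t⟩ hdiff hD
  have hnorm : ‖((0 : T), h)‖ = ‖h‖ := by simp [Prod.norm_def]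
  have hsub : (t, u + h) - (t, u) = ((0 : T), h) := by simp
  rw [hsub, hnorm] at hdiff
  calc ‖g (t, u + h) - g (t, u) - fderiv ℝ g (t, u) (0, h)‖
      = ‖(g (t, u + h) - g (t, u) - fderiv ℝ g (t₀, u) (0, h))
          - (fderiv ℝ g (t, u) - fderiv ℝ g (t₀, u)) (0, h)‖ := by
        rw [_root_.sub_apply]
        congr 1
        abel
    _ ≤ ε / 2 * ‖h‖ + ε / 2 * ‖h‖ :=
        (norm_sub_le _ _).trans (add_le_add hdiff
          ((ContinuousLinearMap.le_of_opNorm_le _ hD.le _).trans_eq (by rw [hnorm])))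
    _ = ε * ‖h‖ := by ring

lemma eventually_forall_norm_variation_defect_le {G : T × E → M →L[ℝ] M} {S : Set T} {u : E}
    {φ : T → M} {Z : T → E →L[ℝ] M} (hS : IsCompact S)
    (hG : ∀ t ∈ S, ContDiffAt ℝ 1 G (t, u)) (hφ : ContinuousOn φ S) (hZ : ContinuousOn Z S)
    {ε : ℝ} (hε : 0 < ε) :
    ∀ᶠ h in 𝓝 (0 : E), ∀ t ∈ S,
      ‖G (t, u) (φ t) + (G (t, u) (Z t h) + fderiv ℝ G (t, u) (0, h) (φ t))
        - G (t, u + h) (φ t + Z t h)‖ ≤ ε * ‖h‖ := by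
  obtain ⟨B, hB⟩ := hS.exists_bound_of_continuousOn hφ
  obtain ⟨C, hC⟩ := hS.exists_bound_of_continuousOn hZ
  obtain ⟨η, hη, hηε⟩ := exists_pos_mul_lt hε (B + C)
  filter_upwards [eventually_forall_norm_fderiv_remainder_le hS hG hη,
    eventually_forall_norm_sub_lt hS (fun t ht ↦ (hG t ht).continuousAt) hη] with h hrem hsub t ht
  calc _ = ‖-((G (t, u + h) - G (t, u) - fderiv ℝ G (t, u) (0, h)) (φ t)
          + (G (t, u + h) - G (t, u)) (Z t h))‖ := by
        simp only [_root_.sub_apply, map_add]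
        congr 1
        abel
    _ ≤ η * ‖h‖ * B + η * (C * ‖h‖) := by
        rw [norm_neg]
        exact norm_add_le_of_le
          (ContinuousLinearMap.le_of_opNorm_le_of_le _ (hrem t ht) (hB t ht))
          (ContinuousLinearMap.le_of_opNorm_le_of_le _ (hsub t ht).le
            ((Z t).le_of_opNorm_le (hC t ht) h))
    _ = (B + C) * η * ‖h‖ := by ring
    _ ≤ ε * ‖h‖ := by gcongr

theorem hasFDerivAt_linear_ode_param {G : ℝ × E → M →L[ℝ] M} {φ : E → ℝ → M}
    {Z : ℝ → E →L[ℝ] M} {u : E} (hG : ∀ t ∈ Icc a b, ContDiffAt ℝ 1 G (t, u))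
    (hφ : ∀ᶠ y in 𝓝 u, IsIntegralCurveOn (φ y) (fun t m ↦ G (t, y) m) (Icc a b))
    (hinit : HasFDerivAt (fun y ↦ φ y a) (Z a) u)
    (hZ : IsIntegralCurveOn Z (fun t z ↦ (G (t, u)).comp z +
      ((fderiv ℝ G (t, u)).comp (ContinuousLinearMap.inr ℝ ℝ E)).flip (φ u t)) (Icc a b)) :
    ∀ t ∈ Icc a b, HasFDerivAt (fun y ↦ φ y t) (Z t) u := by
  have hGc : ∀ t ∈ Icc a b, ContinuousAt G (t, u) := fun t ht ↦ (hG t ht).continuousAt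
  obtain ⟨C, hC⟩ := isCompact_Icc.exists_bound_of_continuousOn (f := fun t ↦ G (t, u))
    (s := Icc a b) fun t ht ↦
      ((hGc t ht).comp (f := fun s ↦ (s, u)) (by fun_prop)).continuousWithinAt
  have hφu := hφ.self_of_nhds
  rw [hasFDerivAt_iff_isLittleO_nhds_zero] at hinit
  intro t ht
  rw [hasFDerivAt_iff_isLittleO_nhds_zero, Asymptotics.isLittleO_iff]
  intro ε hε
  obtain ⟨η, hη, hηε⟩ := exists_pos_mul_lt hε (gronwallBound 1 (C + 1) 1 (t - a))
  have hshift : Filter.Tendsto (fun h ↦ u + h) (𝓝 0) (𝓝 u) :=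
    Continuous.tendsto' (by fun_prop) _ _ (add_zero u)
  filter_upwards [hshift.eventually hφ, hinit.def hη,
    eventually_forall_norm_sub_lt isCompact_Icc hGc one_pos,
    eventually_forall_norm_variation_defect_le isCompact_Icc hG hφu.continuousOn
      hZ.continuousOn hη] with h hφh hinit_h hG_h hdefect
  have hK : ∀ s ∈ Icc a b, ‖G (s, u + h)‖ ≤ C + 1 := fun s hs ↦ by
    have := norm_le_norm_add_norm_sub' (G (s, u + h)) (G (s, u))
    linarith [hC s hs, hG_h s hs]
  have hψ : ∀ s ∈ Icc a b, HasDerivWithinAt (fun s ↦ φ u s + Z s h)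
      (G (s, u) (φ u s) + (G (s, u) (Z s h) + fderiv ℝ G (s, u) (0, h) (φ u s)))
      (Icc a b) s := fun s hs ↦ by
    simpa using! (hφu s hs).add ((hZ s hs).clm_apply (hasDerivWithinAt_const s (Icc a b) h))
  calc ‖φ (u + h) t - φ u t - Z t h‖ = ‖φ (u + h) t - (φ u t + Z t h)‖ := by rw [sub_sub]
    _ ≤ gronwallBound (η * ‖h‖) (C + 1) (η * ‖h‖) (t - a) :=
        norm_sub_le_gronwallBound_of_linear hK hφh hψ (by rwa [← sub_sub]) hdefect t ht
    _ = η * ‖h‖ * gronwallBound 1 (C + 1) 1 (t - a) := by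
        simpa using gronwallBound_mul_left (η * ‖h‖) 1 (C + 1) 1 (t - a)
    _ = gronwallBound 1 (C + 1) 1 (t - a) * η * ‖h‖ := by ring
    _ ≤ ε * ‖h‖ := by gcongr

end LinearODE

section Connection

set_option maxSynthPendingDepth 3

variable {E M : Type*} [NormedAddCommGroup E] [NormedSpace ℝ E]
  [NormedAddCommGroup M] [NormedSpace ℝ M]
  {ω : E → E →L[ℝ] M →L[ℝ] M} {U : Set E} {p x : E}

/-- The curvature two-form `dω + ω ∧ ω` of the connection `d + ω`, where `ω` is a one-form with
values in the endomorphisms of the fibre `M`. -/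
noncomputable def connectionCurvature (ω : E → E →L[ℝ] M →L[ℝ] M) (x : E) :
    E →L[ℝ] E →L[ℝ] M →L[ℝ] M :=
  let B := fderiv ℝ ω x + (ContinuousLinearMap.mul ℝ (M →L[ℝ] M)).bilinearComp (ω x) (ω x)
  B - B.flip

/-- `A` is a parallel section over `U` of the connection `d + ω`, that is, `dA = -ω A` on `U`. -/
def IsParallelOn (ω : E → E →L[ℝ] M →L[ℝ] M) (A : E → M) (U : Set E) : Prop :=
  ∀ x ∈ U, HasFDerivAt A (-(ω x).flip (A x)) x

/-- The coefficient at `(t, y)` of the equation of parallel transport for the connection `d + ω`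
along the ray `t ↦ p + t • (y - p)`. -/
noncomputable def radialTransportCoeff (ω : E → E →L[ℝ] M →L[ℝ] M) (p : E) (z : ℝ × E) :
    M →L[ℝ] M :=
  -ω (p + z.1 • (z.2 - p)) (z.2 - p)

lemma connectionCurvature_apply (ω : E → E →L[ℝ] M →L[ℝ] M) (x v w : E) :
    connectionCurvature ω x v w =
      fderiv ℝ ω x v w + ω x v * ω x w - (fderiv ℝ ω x w v + ω x w * ω x v) :=
  rfl

lemma contDiffAt_radialTransportCoeff {n : WithTop ℕ∞} {z : ℝ × E}
    (hω : ContDiffAt ℝ n ω (p + z.1 • (z.2 - p))) :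
    ContDiffAt ℝ n (radialTransportCoeff ω p) z :=
  ((hω.comp z (f := fun z : ℝ × E ↦ p + z.1 • (z.2 - p)) (by fun_prop)).clm_apply
    (by fun_prop)).neg

lemma fderiv_radialTransportCoeff_inr {t : ℝ} (hω : DifferentiableAt ℝ ω (p + t • (x - p)))
    (h : E) :
    fderiv ℝ (radialTransportCoeff ω p) (t, x) (0, h) =
      -(t • fderiv ℝ ω (p + t • (x - p)) h (x - p) + ω (p + t • (x - p)) h) := by
  have hsub : HasFDerivAt (fun z : ℝ × E ↦ z.2 - p) (ContinuousLinearMap.snd ℝ ℝ E) (t, x) :=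
    hasFDerivAt_snd.sub_const p
  have hray : HasFDerivAt (fun z : ℝ × E ↦ p + z.1 • (z.2 - p)) _ (t, x) :=
    (hasFDerivAt_fst.smul hsub).const_add p
  have hcoeff := ((hω.hasFDerivAt.comp (t, x) hray).clm_apply hsub).neg
  refine (DFunLike.congr_fun hcoeff.fderiv (0, h)).trans ?_
  simp [add_comm]

lemma isIntegralCurveOn_radial_variation {φ : ℝ → M} {s : Set ℝ}
    (hφ : IsIntegralCurveOn φ (fun t m ↦ radialTransportCoeff ω p (t, x) m) s)
    (hω : ∀ t ∈ s, DifferentiableAt ℝ ω (p + t • (x - p)))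
    (hflat : ∀ t ∈ s, connectionCurvature ω (p + t • (x - p)) = 0) :
    IsIntegralCurveOn (fun t ↦ -(t • (ω (p + t • (x - p))).flip (φ t)))
      (fun t z ↦ (radialTransportCoeff ω p (t, x)).comp z +
        ((fderiv ℝ (radialTransportCoeff ω p) (t, x)).comp
          (ContinuousLinearMap.inr ℝ ℝ E)).flip (φ t)) s := by
  intro t ht
  set γ := p + t • (x - p)
  set v := x - p
  have hray : HasDerivWithinAt (fun t : ℝ ↦ p + t • v) v s t := by
    simpa using (((hasDerivAt_id t).smul_const v).const_add p).hasDerivWithinAt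
  have hωray : HasDerivWithinAt (fun t ↦ (ω (p + t • v)).flip) (fderiv ℝ ω γ v).flip s t :=
    (ContinuousLinearMap.flipₗᵢ ℝ E M M).toContinuousLinearEquiv.hasFDerivAt.comp_hasDerivWithinAt
      t ((hω t ht).hasFDerivAt.comp_hasDerivWithinAt t hray)
  refine ((hasDerivWithinAt_id t s).smul (hωray.clm_apply (hφ t ht))).neg.congr_deriv ?_
  ext h
  have hcurv : fderiv ℝ ω γ v h (φ t) + ω γ v (ω γ h (φ t))
      - (fderiv ℝ ω γ h v (φ t) + ω γ h (ω γ v (φ t))) = 0 :=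
    congr($(hflat t ht) v h (φ t))
  have hcoeff : radialTransportCoeff ω p (t, x) = -ω γ v := rfl
  have hfderiv : fderiv ℝ (radialTransportCoeff ω p) (t, x) (0, h) =
      -(t • fderiv ℝ ω γ h v + ω γ h) := fderiv_radialTransportCoeff_inr (hω t ht) h
  change -(t • (fderiv ℝ ω γ v h (φ t) + ω γ h (radialTransportCoeff ω p (t, x) (φ t)))
      + (1 : ℝ) • ω γ h (φ t)) =
    radialTransportCoeff ω p (t, x) (-(t • ω γ h (φ t)))
      + fderiv ℝ (radialTransportCoeff ω p) (t, x) (0, h) (φ t)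
  simp only [hcoeff, hfderiv, _root_.neg_apply, _root_.add_apply, _root_.smul_apply, map_neg,
    map_smul]
  linear_combination (norm := module) (-t) • hcurv

theorem exists_isParallelOn_of_starConvex [CompleteSpace M] (hU : IsOpen U)
    (hstar : StarConvex ℝ p U) (hp : p ∈ U) (hω : ContDiffOn ℝ 1 ω U)
    (hflat : ∀ x ∈ U, connectionCurvature ω x = 0) (m : M) :
    ∃ A : E → M, A p = m ∧ IsParallelOn ω A U := by
  have hray : ∀ x ∈ U, ∀ t ∈ Icc (0 : ℝ) 1, p + t • (x - p) ∈ U :=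
    fun x hx t ht ↦ hstar.add_smul_sub_mem hx ht.1 ht.2
  have hωAt : ∀ x ∈ U, ContDiffAt ℝ 1 ω x := fun x hx ↦ hω.contDiffAt (hU.mem_nhds hx)
  have hcoeff : ∀ x ∈ U, ∀ t ∈ Icc (0 : ℝ) 1, ContDiffAt ℝ 1 (radialTransportCoeff ω p) (t, x) :=
    fun x hx t ht ↦ contDiffAt_radialTransportCoeff (hωAt _ (hray x hx t ht))
  have htransport : ∀ x ∈ U, ∃ φ : ℝ → M, φ 0 = m ∧ IsIntegralCurveOn φ
      (fun t y ↦ radialTransportCoeff ω p (t, x) y) (Icc 0 1) := fun x hx ↦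
    exists_isIntegralCurveOn_linear zero_le_one (fun t ht ↦ ((hcoeff x hx t ht).continuousAt.comp
      (f := fun s ↦ (s, x)) (by fun_prop)).continuousWithinAt) m
  choose! φ hφ₀ hφ using htransport
  refine ⟨fun x ↦ φ x 1, ?_, fun x hx ↦ ?_⟩
  · have hconst : ∀ t ∈ Icc (0 : ℝ) 1, φ p t = φ p 0 :=
      constant_of_has_deriv_right_zero (hφ p hp).continuousOn fun t ht ↦ by
        simpa [radialTransportCoeff] using
          (hφ p hp t (Ico_subset_Icc_self ht)).mono_of_mem_nhdsWithin (Icc_mem_nhdsGE_of_mem ht)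
    exact (hconst 1 (right_mem_Icc.2 zero_le_one)).trans (hφ₀ p hp)
  · have hinit : HasFDerivAt (fun y ↦ φ y 0) (0 : E →L[ℝ] M) x :=
      (hasFDerivAt_const m x).congr_of_eventuallyEq <|
        (hU.eventually_mem hx).mono hφ₀
    have hvar := isIntegralCurveOn_radial_variation (hφ x hx)
      (fun t ht ↦ (hωAt _ (hray x hx t ht)).differentiableAt one_ne_zero)
      fun t ht ↦ hflat _ (hray x hx t ht)
    simpa using hasFDerivAt_linear_ode_param (hcoeff x hx) ((hU.eventually_mem hx).mono hφ)
      (by simpa using hinit) hvar 1 (right_mem_Icc.2 zero_le_one)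

theorem contDiffOn_of_isParallelOn {A : E → M} {r : ℕ∞} (hU : IsOpen U) (hω : ContDiffOn ℝ r ω U)
    (hA : IsParallelOn ω A U) : ContDiffOn ℝ (r + 1) A U := by
  have hdiff : DifferentiableOn ℝ A U := fun x hx ↦
    (hA x hx).differentiableAt.differentiableWithinAt
  have hflip : ContDiffOn ℝ r (fun x ↦ (ω x).flip) U :=
    (ContinuousLinearMap.flipₗᵢ ℝ E M M).toContinuousLinearEquiv.contDiff.comp_contDiffOn hω
  have hsucc : ∀ j : ℕ∞, j ≤ r → ContDiffOn ℝ j A U → ContDiffOn ℝ (j + 1) A U :=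
    fun j hjr hAj ↦ (contDiffOn_succ_iff_fderiv_of_isOpen hU).2
      ⟨hdiff, by simp, ((hflip.of_le (mod_cast hjr)).clm_apply hAj).neg.congr
        fun x hx ↦ (hA x hx).fderiv⟩
  have hnat : ∀ j : ℕ, (j : ℕ∞) ≤ r → ContDiffOn ℝ j A U := fun j ↦ by
    induction j with
    | zero => exact fun _ ↦ contDiffOn_zero.2 hdiff.continuousOn
    | succ j ih =>
      intro hj
      have hjr : (j : ℕ∞) ≤ r := le_trans (by simp) hj
      exact hsucc j hjr (ih hjr)
  exact hsucc r le_rfl (contDiffOn_iff_forall_nat_le.2 hnat)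

end Connection

section Coordinates

set_option maxSynthPendingDepth 3

lemma clm_ext_pi_single {ι N : Type*} [Finite ι] [DecidableEq ι] [NormedAddCommGroup N]
    [NormedSpace ℝ N] {f g : (ι → ℝ) →L[ℝ] N}
    (h : ∀ k, f (Pi.single k 1) = g (Pi.single k 1)) : f = g :=
  ContinuousLinearMap.coe_injective <| (Pi.basisFun ℝ ι).ext fun k ↦ by simpa using h k

variable {ι M N : Type*} [Fintype ι] [NormedAddCommGroup M] [NormedSpace ℝ M]
  [NormedAddCommGroup N] [NormedSpace ℝ N] {U : Set (ι → ℝ)} {x : ι → ℝ}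

/-- The one-form `∑ k, Θ k dx^k` on `ℝ^ι` with components `Θ k`. -/
noncomputable def formOfComponents (Θ : ι → (ι → ℝ) → N) (x : ι → ℝ) : (ι → ℝ) →L[ℝ] N :=
  ∑ k, (ContinuousLinearMap.proj k : (ι → ℝ) →L[ℝ] ℝ).smulRight (Θ k x)

lemma contDiffOn_formOfComponents {Θ : ι → (ι → ℝ) → N} {r : WithTop ℕ∞}
    (hΘ : ∀ k, ContDiffOn ℝ r (Θ k) U) : ContDiffOn ℝ r (formOfComponents Θ) U :=
  ContDiffOn.sum fun k _ ↦ contDiffOn_const.smulRight (hΘ k)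

variable [DecidableEq ι]

lemma formOfComponents_single (Θ : ι → (ι → ℝ) → N) (x : ι → ℝ) (k : ι) :
    formOfComponents Θ x (Pi.single k 1) = Θ k x := by
  simp [formOfComponents, _root_.sum_apply, Pi.single_apply]

lemma fderiv_formOfComponents_single {Θ : ι → (ι → ℝ) → N}
    (hΘ : DifferentiableAt ℝ (formOfComponents Θ) x) (v : ι → ℝ) (k : ι) :
    fderiv ℝ (formOfComponents Θ) x v (Pi.single k 1) = fderiv ℝ (Θ k) x v := by
  have := (hΘ.hasFDerivAt.clm_apply (hasFDerivAt_const (Pi.single k 1) x)).fderiv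
  simp only [formOfComponents_single] at this
  simp [this]

lemma connectionCurvature_formOfComponents_single {Θ : ι → (ι → ℝ) → M →L[ℝ] M}
    (hΘ : DifferentiableAt ℝ (formOfComponents Θ) x) (k l : ι) :
    connectionCurvature (formOfComponents Θ) x (Pi.single k 1) (Pi.single l 1) =
      fderiv ℝ (Θ l) x (Pi.single k 1) - fderiv ℝ (Θ k) x (Pi.single l 1)
        + Θ k x * Θ l x - Θ l x * Θ k x := by
  simp only [connectionCurvature_apply, fderiv_formOfComponents_single hΘ, formOfComponents_single]
  abel

theorem exists_parallel_of_components [CompleteSpace M] (ρ : N →L[ℝ] M →L[ℝ] M) {p : ι → ℝ}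
    {r : ℕ∞} (hr : 1 ≤ r) (hU : IsOpen U) (hstar : StarConvex ℝ p U) (hp : p ∈ U)
    {Γ : ι → (ι → ℝ) → N} (hΓ : ∀ k, ContDiffOn ℝ r (Γ k) U)
    (hflat : ∀ k l, ∀ x ∈ U,
      ρ (fderiv ℝ (Γ l) x (Pi.single k 1)) - ρ (fderiv ℝ (Γ k) x (Pi.single l 1))
        + ρ (Γ k x) * ρ (Γ l x) - ρ (Γ l x) * ρ (Γ k x) = 0) (m : M) :
    ∃ A : (ι → ℝ) → M, A p = m ∧ ContDiffOn ℝ (r + 1) A U ∧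
      ∀ x ∈ U, ∀ k, fderiv ℝ A x (Pi.single k 1) = -ρ (Γ k x) (A x) := by
  have hr₁ : (1 : WithTop ℕ∞) ≤ r := mod_cast hr
  have hr₀ : (r : WithTop ℕ∞) ≠ 0 := (zero_lt_one.trans_le hr₁).ne'
  have hω : ContDiffOn ℝ r (formOfComponents fun k x ↦ ρ (Γ k x)) U :=
    contDiffOn_formOfComponents fun k ↦ ρ.contDiff.comp_contDiffOn (hΓ k)
  have hcurv : ∀ x ∈ U, connectionCurvature (formOfComponents fun k x ↦ ρ (Γ k x)) x = 0 := by
    intro x hx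
    have hωx := (hω.contDiffAt (hU.mem_nhds hx)).differentiableAt hr₀
    have hρΓ : ∀ k v, fderiv ℝ (fun y ↦ ρ (Γ k y)) x v = ρ (fderiv ℝ (Γ k) x v) := fun k v ↦
      congr($((ρ.hasFDerivAt.comp x (((hΓ k).contDiffAt (hU.mem_nhds hx)).differentiableAt
        hr₀).hasFDerivAt).fderiv) v)
    refine clm_ext_pi_single fun k ↦ clm_ext_pi_single fun l ↦ ?_
    rw [connectionCurvature_formOfComponents_single hωx, hρΓ, hρΓ]
    exact hflat k l x hx
  obtain ⟨A, hAp, hA⟩ := exists_isParallelOn_of_starConvex hU hstar hp (hω.of_le hr₁) hcurv m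
  refine ⟨A, hAp, contDiffOn_of_isParallelOn hU hω hA, fun x hx k ↦ ?_⟩
  rw [(hA x hx).fderiv, _root_.neg_apply, ContinuousLinearMap.flip_apply, formOfComponents_single]

end Coordinates

theorem flat_connection_has_parallel_frame_general {ι m : Type*} [Fintype ι] [DecidableEq ι]
    [Fintype m] [DecidableEq m] {r : ℕ∞} (hr : 1 ≤ r) {U : Set (ι → ℝ)} (hU : IsOpen U)
    {x₀ : ι → ℝ} (hx₀ : x₀ ∈ U) {Γ : ι → (ι → ℝ) → Matrix m m ℝ}
    (hΓ : ∀ k, ContDiffOn ℝ r (Γ k) U)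
    (hflat : ∀ k l, ∀ x ∈ U,
      fderiv ℝ (Γ l) x (Pi.single k 1) - fderiv ℝ (Γ k) x (Pi.single l 1)
        + Γ k x * Γ l x - Γ l x * Γ k x = 0) :
    ∃ V : Set (ι → ℝ), IsOpen V ∧ x₀ ∈ V ∧ V ⊆ U ∧
      ∃ A : (ι → ℝ) → Matrix m m ℝ,
        ContDiffOn ℝ (r + 1) A V ∧ (∀ x ∈ V, IsUnit (A x)) ∧
        ∀ x ∈ V, ∀ k, fderiv ℝ A x (Pi.single k 1) = -(Γ k x * A x) := by
  obtain ⟨R, hR, hball⟩ := Metric.isOpen_iff.1 hU x₀ hx₀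
  have hx₀R := Metric.mem_ball_self (x := x₀) hR
  obtain ⟨A, hA₀, hAdiff, hA⟩ := exists_parallel_of_components
    (LinearMap.mul ℝ (Matrix m m ℝ)).toContinuousBilinearMap hr Metric.isOpen_ball
    ((convex_ball x₀ R).starConvex hx₀R) hx₀R (fun k ↦ (hΓ k).mono hball)
    (fun k l x hx ↦ ContinuousLinearMap.ext fun B ↦ by
      simpa [add_mul, sub_mul, mul_assoc] using! congr($(hflat k l x (hball hx)) * B)) 1
  have hdet : ContinuousOn (fun x ↦ (A x).det) (Metric.ball x₀ R) :=
    continuous_id.matrix_det.comp_continuousOn hAdiff.continuousOn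
  exact ⟨Metric.ball x₀ R ∩ (fun x ↦ (A x).det) ⁻¹' {0}ᶜ,
    hdet.isOpen_inter_preimage Metric.isOpen_ball isOpen_compl_singleton,
    ⟨hx₀R, by simp [hA₀]⟩, inter_subset_left.trans hball, A, hAdiff.mono inter_subset_left,
    fun x hx ↦ (Matrix.isUnit_iff_isUnit_det _).2 (isUnit_iff_ne_zero.2 hx.2),
    fun x hx k ↦ hA x hx.1 k⟩

/-- **Flat connections admit local parallel frames.**
If the connection component matrices `Γ k` are smooth on the open set `U` and curvature-free
there, then near any `x₀ ∈ U` there is a smooth invertible-matrix-valued map `A`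
with `∂ₖ A = -(Γ k)·A`, i.e. a frame in which the components of the connection vanish. -/
theorem flat_connection_has_parallel_frame
    (n : ℕ) (hn : 1 ≤ n) (U : Set (Fin n → ℝ)) (hU : IsOpen U)
    (x₀ : Fin n → ℝ) (hx₀ : x₀ ∈ U)
    (Γ : Fin n → (Fin n → ℝ) → Matrix (Fin n) (Fin n) ℝ)
    (hΓ : ∀ k, ContDiffOn ℝ (⊤ : ℕ∞) (Γ k) U)
    (hflat : ∀ k l, ∀ x ∈ U,
      fderiv ℝ (Γ l) x (Pi.single k 1) - fderiv ℝ (Γ k) x (Pi.single l 1)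
        + Γ k x * Γ l x - Γ l x * Γ k x = 0) :
    ∃ V : Set (Fin n → ℝ), IsOpen V ∧ x₀ ∈ V ∧ V ⊆ U ∧
      ∃ A : (Fin n → ℝ) → Matrix (Fin n) (Fin n) ℝ,
        ContDiffOn ℝ (⊤ : ℕ∞) A V ∧ (∀ x ∈ V, IsUnit (A x)) ∧
        ∀ x ∈ V, ∀ k, fderiv ℝ A x (Pi.single k 1) = -(Γ k x * A x) :=
  flat_connection_has_parallel_frame_general le_top hU hx₀ hΓ hflat
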